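/- Let T1, T2, T3 : A → B(H) be completely positive maps. Suppose (π, V1, K), (π, V2, K) is a common dilation of (T1, T2) and (π̌, V̌2, Ǩ), (π̌, V̌3, Ǩ) is a common dilation of (T2, T3). Then there exist a complex Hilbert space L, a *-homomorphism ρ : A → B(L), and bounded operators W1, W3 : H → L such that (ρ, W1, L), (ρ, W3, L) is a common dilation of (T1, T3) and ‖W1 − W3‖ ≤ ‖V1 − V2‖ + ‖V̌2 − V̌3‖ (triangle inequality for the Bures distance). -/

import Mathlib

noncomputable section

universe u v w w'

/-- A linear map between star algebras is *completely positive* if, for every `n`, its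
entrywise application to `n × n` matrices maps positive elements (i.e. elements of the form
`star y * y`) to positive elements. -/
def IsCPMap {A B : Type*} [NonUnitalSemiring A] [StarRing A]
    [NonUnitalSemiring B] [StarRing B] (T : A → B) : Prop :=
  ∀ (n : ℕ) (x : Matrix (Fin n) (Fin n) A),
    (∃ y : Matrix (Fin n) (Fin n) A, x = star y * y) →
      ∃ z : Matrix (Fin n) (Fin n) B, x.map T = star z * z

/-- `(π, V, K)` is a Stinespring dilation of `T : A → B(H)`:
`T a = V⋆ ∘ π a ∘ V` for all `a`. -/
def IsStinespring {A : Type*} [CStarAlgebra A]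
    {H : Type*} [NormedAddCommGroup H] [InnerProductSpace ℂ H] [CompleteSpace H]
    {K : Type*} [NormedAddCommGroup K] [InnerProductSpace ℂ K] [CompleteSpace K]
    (T : A →ₗ[ℂ] (H →L[ℂ] H)) (π : A →⋆ₙₐ[ℂ] (K →L[ℂ] K)) (V : H →L[ℂ] K) : Prop :=
  ∀ a : A, T a = (ContinuousLinearMap.adjoint V).comp ((π a).comp V)

set_option linter.unusedSectionVars false

theorem exists_partial_isometry {E K K' : Type*} [AddCommGroup E] [Module ℂ E]
    [NormedAddCommGroup K] [InnerProductSpace ℂ K] [CompleteSpace K]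
    [NormedAddCommGroup K'] [InnerProductSpace ℂ K'] [CompleteSpace K']
    (f : E →ₗ[ℂ] K) (f' : E →ₗ[ℂ] K') (h : ∀ x, ‖f x‖ = ‖f' x‖) :
    ∃ w : K' →L[ℂ] K, (∀ x, w (f' x) = f x) ∧
      (∀ k ∈ (LinearMap.range f').topologicalClosureᗮ, w k = 0) ∧
      (∀ k ∈ (LinearMap.range f').topologicalClosure, ‖w k‖ = ‖k‖) := by
  set M := (LinearMap.range f').topologicalClosure with hM
  have hmem : ∀ x, f' x ∈ M := fun x =>
    Submodule.le_topologicalClosure _ (LinearMap.mem_range_self f' x)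
  let e : E →ₗ[ℂ] M := f'.codRestrict M hmem
  have hd : DenseRange e := by
    rintro ⟨k, hk⟩
    have hk' : k ∈ closure (Set.range f') := by
      have := hk
      rw [hM, ← SetLike.mem_coe, Submodule.topologicalClosure_coe] at this
      simpa only [LinearMap.coe_range] using this
    rw [closure_subtype]
    convert hk'
    ext y
    simp [e]
  have hn : ∃ C, ∀ x, ‖f x‖ ≤ C * ‖e x‖ := ⟨1, fun x => by simp [h, e]⟩
  have : CompleteSpace M := (Submodule.isClosed_topologicalClosure _).completeSpace_coe
  let S : M →L[ℂ] K := f.extendOfNorm e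
  have hS : ∀ x, S (e x) = f x := LinearMap.extendOfNorm_eq hd hn
  have hSn : ∀ k, ‖S k‖ = ‖k‖ := by
    intro k
    refine isClosed_property (p := fun k => ‖S k‖ = ‖k‖) hd (isClosed_eq (by fun_prop) (by fun_prop)) (fun x => ?_) k
    rw [hS, h]; rfl
  have hP : ∀ k (hk : k ∈ M), M.orthogonalProjectionOnto k = ⟨k, hk⟩ := fun k hk =>
    Submodule.orthogonalProjectionOnto_mem_subspace_eq_self (⟨k, hk⟩ : M)
  refine ⟨S.comp M.orthogonalProjectionOnto, fun x => ?_, fun k hk => ?_, fun k hk => ?_⟩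
  · rw [ContinuousLinearMap.comp_apply, hP _ (hmem x)]
    exact hS x
  · rw [ContinuousLinearMap.comp_apply,
      Submodule.orthogonalProjectionOnto_apply_of_mem_orthogonal hk, map_zero]
  · rw [ContinuousLinearMap.comp_apply, hP _ hk, hSn]; rfl

section
variable {A H K : Type*} [CStarAlgebra A]
  [NormedAddCommGroup H] [InnerProductSpace ℂ H] [CompleteSpace H]
  [NormedAddCommGroup K] [InnerProductSpace ℂ K] [CompleteSpace K]

open scoped TensorProduct

/-- The map `a ⊗ h ↦ π a (V h)`. -/
def dilMap (π : A →⋆ₙₐ[ℂ] (K →L[ℂ] K)) (V : H →L[ℂ] K) : A ⊗[ℂ] H →ₗ[ℂ] K :=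
  TensorProduct.lift (LinearMap.mk₂ ℂ (fun a h => π a (V h))
    (by intros; simp) (by intros; simp) (by intros; simp) (by intros; simp))

@[simp] theorem dilMap_tmul (π : A →⋆ₙₐ[ℂ] (K →L[ℂ] K)) (V : H →L[ℂ] K) (a : A) (h : H) :
    dilMap π V (a ⊗ₜ h) = π a (V h) := by
  simp [dilMap]

theorem dilMap_mul (π : A →⋆ₙₐ[ℂ] (K →L[ℂ] K)) (V : H →L[ℂ] K) (a : A) (x : A ⊗[ℂ] H) :
    π a (dilMap π V x) = dilMap π V ((LinearMap.mulLeft ℂ a).rTensor H x) := by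
  induction x with
  | zero => simp
  | tmul b h => simp
  | add x y hx hy => simp [hx, hy]

theorem pi_inner (π : A →⋆ₙₐ[ℂ] (K →L[ℂ] K)) (a : A) (x y : K) :
    inner ℂ (π a x) y = inner ℂ x (π (star a) y) := by
  rw [map_star, ContinuousLinearMap.star_eq_adjoint, ContinuousLinearMap.adjoint_inner_right]

theorem dilMap_inner {K' : Type*}
    [NormedAddCommGroup K'] [InnerProductSpace ℂ K'] [CompleteSpace K']
    {T : A →ₗ[ℂ] (H →L[ℂ] H)}
    {π : A →⋆ₙₐ[ℂ] (K →L[ℂ] K)} {V : H →L[ℂ] K} (hV : IsStinespring T π V)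
    {π' : A →⋆ₙₐ[ℂ] (K' →L[ℂ] K')} {V' : H →L[ℂ] K'} (hV' : IsStinespring T π' V')
    (x y : A ⊗[ℂ] H) :
    inner ℂ (dilMap π V x) (dilMap π V y) = inner ℂ (dilMap π' V' x) (dilMap π' V' y) := by
  induction x with
  | zero => simp
  | add x x' hx hx' => simp [inner_add_left, hx, hx']
  | tmul a h =>
    induction y with
    | zero => simp
    | add y y' hy hy' => simp only [map_add, inner_add_right, hy, hy']
    | tmul b k =>
      simp only [dilMap_tmul, pi_inner]
      have e1 := congrArg (fun X : H →L[ℂ] H => inner ℂ h (X k)) (hV (star a * b))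
      have e2 := congrArg (fun X : H →L[ℂ] H => inner ℂ h (X k)) (hV' (star a * b))
      simp only [ContinuousLinearMap.comp_apply, ContinuousLinearMap.adjoint_inner_right,
        map_mul, ContinuousLinearMap.mul_apply] at e1 e2
      rw [← e1, ← e2]

theorem exists_intertwiner {K' : Type*}
    [NormedAddCommGroup K'] [InnerProductSpace ℂ K'] [CompleteSpace K']
    {T : A →ₗ[ℂ] (H →L[ℂ] H)}
    {π : A →⋆ₙₐ[ℂ] (K →L[ℂ] K)} {V : H →L[ℂ] K} (hV : IsStinespring T π V)
    {π' : A →⋆ₙₐ[ℂ] (K' →L[ℂ] K')} {V' : H →L[ℂ] K'} (hV' : IsStinespring T π' V') :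
    ∃ (w : K' →L[ℂ] K) (Q : K' →L[ℂ] K'),
      (∀ h, w (π' 1 (V' h)) = π 1 (V h)) ∧ (∀ h, Q (π' 1 (V' h)) = 0) ∧
      (∀ k, ‖w k‖ ^ 2 + ‖Q k‖ ^ 2 = ‖k‖ ^ 2) ∧
      (∀ a k, w (π' a k) = π a (w k)) ∧ (∀ a k, Q (π' a k) = π' a (Q k)) := by
  obtain ⟨w, hw1, hw2, hw3⟩ := exists_partial_isometry (dilMap π V) (dilMap π' V') (by
    intro x
    rw [@norm_eq_sqrt_re_inner ℂ, @norm_eq_sqrt_re_inner ℂ, dilMap_inner hV hV'])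
  set M := (LinearMap.range (dilMap π' V')).topologicalClosure with hM
  have : CompleteSpace M := (Submodule.isClosed_topologicalClosure _).completeSpace_coe
  have hmem : ∀ x, dilMap π' V' x ∈ M := fun x =>
    Submodule.le_topologicalClosure _ (LinearMap.mem_range_self _ x)
  -- closure induction
  have hind : ∀ (p : K' → Prop), IsClosed {k | p k} → (∀ x, p (dilMap π' V' x)) →
      ∀ k ∈ M, p k := by
    intro p hp hx k hk
    have : k ∈ closure (Set.range (dilMap π' V')) := by
      rw [hM, ← SetLike.mem_coe, Submodule.topologicalClosure_coe] at hk
      simpa only [LinearMap.coe_range] using hk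
    refine closure_minimal ?_ hp this
    rintro _ ⟨x, rfl⟩
    exact hx x
  have hinv : ∀ a, ∀ k ∈ M, π' a k ∈ M := by
    intro a
    apply hind
    · exact (Submodule.isClosed_topologicalClosure _).preimage (π' a).continuous
    · intro x
      rw [dilMap_mul]
      exact hmem _
  have hinv' : ∀ a, ∀ k ∈ Mᗮ, π' a k ∈ Mᗮ := by
    intro a k hk
    rw [Submodule.mem_orthogonal'] at hk ⊢
    intro u hu
    rw [pi_inner]
    exact hk _ (hinv _ _ hu)
  have hwM : ∀ a, ∀ k ∈ M, w (π' a k) = π a (w k) := by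
    intro a
    apply hind
    · exact isClosed_eq (by fun_prop) (by fun_prop)
    · intro x
      rw [dilMap_mul, hw1, hw1, dilMap_mul]
  have hdec : ∀ k, M.starProjection k + (k - M.starProjection k) = k := fun k => by abel
  have hPm : ∀ k, M.starProjection k ∈ M := fun k => M.starProjection_apply_mem k
  have hQm : ∀ k, k - M.starProjection k ∈ Mᗮ := fun k => M.sub_starProjection_mem_orthogonal k
  have hwP : ∀ k, w k = w (M.starProjection k) := by
    intro k
    have := hw2 _ (hQm k)
    rwa [map_sub, sub_eq_zero] at this
  have hPc : ∀ a k, M.starProjection (π' a k) = π' a (M.starProjection k) := by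
    intro a k
    refine (Submodule.eq_starProjection_of_mem_orthogonal (hinv a _ (hPm k)) ?_)
    rw [← map_sub]
    exact hinv' a _ (hQm k)
  have h1 : ∀ h, π' 1 (V' h) = dilMap π' V' (1 ⊗ₜ h) := by simp
  refine ⟨w, 1 - M.starProjection, ?_, ?_, ?_, ?_, ?_⟩
  · intro h
    rw [h1, hw1, dilMap_tmul]
  · intro h
    have : M.starProjection (π' 1 (V' h)) = π' 1 (V' h) := by
      rw [Submodule.starProjection_eq_self_iff, h1]
      exact hmem _
    simp [this]
  · intro k
    rw [hwP, hw3 _ (hPm k)]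
    have := M.norm_sq_eq_add_norm_sq_starProjection k
    rw [this, Submodule.starProjection_orthogonal]
    simp
  · intro a k
    rw [hwP, hPc, hwM _ _ (hPm k), ← hwP]
  · intro a k
    simp [hPc]

/-- Direct sum of two operators on the Hilbert sum. -/
def dsum {K' : Type*} [NormedAddCommGroup K'] [InnerProductSpace ℂ K']
    (x : K →L[ℂ] K) (y : K' →L[ℂ] K') : WithLp 2 (K × K') →L[ℂ] WithLp 2 (K × K') :=
  (WithLp.prodContinuousLinearEquiv 2 ℂ K K').symm.toContinuousLinearMap ∘L
    (x.prodMap y) ∘L (WithLp.prodContinuousLinearEquiv 2 ℂ K K').toContinuousLinearMap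

@[simp] theorem dsum_fst {K' : Type*} [NormedAddCommGroup K'] [InnerProductSpace ℂ K']
    (x : K →L[ℂ] K) (y : K' →L[ℂ] K') (z : WithLp 2 (K × K')) :
    (dsum x y z).fst = x z.fst := rfl

@[simp] theorem dsum_snd {K' : Type*} [NormedAddCommGroup K'] [InnerProductSpace ℂ K']
    (x : K →L[ℂ] K) (y : K' →L[ℂ] K') (z : WithLp 2 (K × K')) :
    (dsum x y z).snd = y z.snd := rfl

theorem lp_ext {K' : Type*} {x y : WithLp 2 (K × K')} (h1 : x.fst = y.fst)
    (h2 : x.snd = y.snd) : x = y :=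
  WithLp.ofLp_injective 2 (Prod.ext h1 h2)

/-- Direct sum of representations. -/
def dsumRep {K' : Type*} [NormedAddCommGroup K'] [InnerProductSpace ℂ K'] [CompleteSpace K']
    (π : A →⋆ₙₐ[ℂ] (K →L[ℂ] K)) (π' : A →⋆ₙₐ[ℂ] (K' →L[ℂ] K')) :
    A →⋆ₙₐ[ℂ] (WithLp 2 (K × K') →L[ℂ] WithLp 2 (K × K')) where
  toFun a := dsum (π a) (π' a)
  map_smul' c a := by ext z; apply lp_ext <;> simp
  map_zero' := by ext z; apply lp_ext <;> simp
  map_add' a b := by ext z; apply lp_ext <;> simp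
  map_mul' a b := by ext z; apply lp_ext <;> simp
  map_star' a := by
    rw [ContinuousLinearMap.star_eq_adjoint, ContinuousLinearMap.eq_adjoint_iff]
    intro x y
    simp only [WithLp.prod_inner_apply, WithLp.ofLp_fst, WithLp.ofLp_snd, dsum_fst, dsum_snd,
      pi_inner, star_star]

/-- Pairing into the Hilbert sum. -/
def lpPair {G K' : Type*} [NormedAddCommGroup G] [InnerProductSpace ℂ G]
    [NormedAddCommGroup K'] [InnerProductSpace ℂ K']
    (x : G →L[ℂ] K) (y : G →L[ℂ] K') : G →L[ℂ] WithLp 2 (K × K') :=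
  (WithLp.prodContinuousLinearEquiv 2 ℂ K K').symm.toContinuousLinearMap ∘L (x.prod y)

@[simp] theorem lpPair_fst {G K' : Type*} [NormedAddCommGroup G] [InnerProductSpace ℂ G]
    [NormedAddCommGroup K'] [InnerProductSpace ℂ K']
    (x : G →L[ℂ] K) (y : G →L[ℂ] K') (g : G) : (lpPair x y g).fst = x g := rfl

@[simp] theorem lpPair_snd {G K' : Type*} [NormedAddCommGroup G] [InnerProductSpace ℂ G]
    [NormedAddCommGroup K'] [InnerProductSpace ℂ K']
    (x : G →L[ℂ] K) (y : G →L[ℂ] K') (g : G) : (lpPair x y g).snd = y g := rfl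

/-- Pushing a dilation forward along an intertwining isometry. -/
theorem IsStinespring.push {L : Type*} [NormedAddCommGroup L] [InnerProductSpace ℂ L]
    [CompleteSpace L] {T : A →ₗ[ℂ] (H →L[ℂ] H)}
    {π : A →⋆ₙₐ[ℂ] (K →L[ℂ] K)} {V : H →L[ℂ] K} (hV : IsStinespring T π V)
    (ρ : A →⋆ₙₐ[ℂ] (L →L[ℂ] L)) (J : K →L[ℂ] L) (hJ : ∀ k, ‖J k‖ = ‖k‖)
    (hi : ∀ a k, J (π a k) = ρ a (J k)) :
    IsStinespring T ρ (J ∘L (π 1) ∘L V) := by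
  have hJi : ∀ x y, inner ℂ (J x) (J y) = inner ℂ x y :=
    fun x y => LinearIsometry.inner_map_map ⟨J.toLinearMap, hJ⟩ x y
  intro a
  ext h
  refine ext_inner_left ℂ fun k => ?_
  rw [hV a]
  simp only [ContinuousLinearMap.comp_apply, ContinuousLinearMap.adjoint_inner_right]
  rw [← hi, hJi, pi_inner, star_one, ← ContinuousLinearMap.mul_apply (π a),
    ← ContinuousLinearMap.mul_apply (π 1), ← map_mul, ← map_mul, mul_one, one_mul]

theorem pi_one_norm (π : A →⋆ₙₐ[ℂ] (K →L[ℂ] K)) (x : K) : ‖π 1 x‖ ≤ ‖x‖ := by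
  have h : IsStarProjection (π 1) := ⟨by
    rw [IsIdempotentElem, ← map_mul, one_mul], by
    rw [IsSelfAdjoint, ← map_star, star_one]⟩
  calc ‖π 1 x‖ ≤ ‖π 1‖ * ‖x‖ := (π 1).le_opNorm x
    _ ≤ 1 * ‖x‖ := by gcongr; exact h.norm_le
    _ = ‖x‖ := one_mul _

end

theorem stmt14 {A : Type u} [CStarAlgebra A]
    {H : Type v} [NormedAddCommGroup H] [InnerProductSpace ℂ H] [CompleteSpace H]
    {K : Type w} [NormedAddCommGroup K] [InnerProductSpace ℂ K] [CompleteSpace K]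
    {K' : Type w'} [NormedAddCommGroup K'] [InnerProductSpace ℂ K'] [CompleteSpace K']
    (T₁ T₂ T₃ : A →ₗ[ℂ] (H →L[ℂ] H))
    (hT₁ : IsCPMap T₁) (hT₂ : IsCPMap T₂) (hT₃ : IsCPMap T₃)
    -- a common dilation of `(T₁, T₂)`
    (π : A →⋆ₙₐ[ℂ] (K →L[ℂ] K)) (V₁ V₂ : H →L[ℂ] K)
    (hV₁ : IsStinespring T₁ π V₁) (hV₂ : IsStinespring T₂ π V₂)
    -- a common dilation of `(T₂, T₃)`
    (π' : A →⋆ₙₐ[ℂ] (K' →L[ℂ] K')) (V₂' V₃' : H →L[ℂ] K')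
    (hV₂' : IsStinespring T₂ π' V₂') (hV₃' : IsStinespring T₃ π' V₃') :
    ∃ (L : Type (max w w')) (_ : NormedAddCommGroup L) (_ : InnerProductSpace ℂ L)
      (_ : CompleteSpace L) (ρ : A →⋆ₙₐ[ℂ] (L →L[ℂ] L)) (W₁ W₃ : H →L[ℂ] L),
      IsStinespring T₁ ρ W₁ ∧ IsStinespring T₃ ρ W₃ ∧
      ‖W₁ - W₃‖ ≤ ‖V₁ - V₂‖ + ‖V₂' - V₃'‖ := by
  obtain ⟨w, Q, hw1, hQ1, hn, hw, hQ⟩ := exists_intertwiner hV₂ hV₂'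
  let J : K' →L[ℂ] WithLp 2 (K × K') := lpPair w Q
  let I : K →L[ℂ] WithLp 2 (K × K') := lpPair (ContinuousLinearMap.id ℂ K) 0
  have hJ : ∀ k, ‖J k‖ = ‖k‖ := fun k => by
    rw [← sq_eq_sq₀ (norm_nonneg _) (norm_nonneg _), WithLp.prod_norm_sq_eq_of_L2]
    exact hn k
  have hI : ∀ k, ‖I k‖ = ‖k‖ := fun k => by
    rw [← sq_eq_sq₀ (norm_nonneg _) (norm_nonneg _), WithLp.prod_norm_sq_eq_of_L2]
    simp [I]
  refine ⟨WithLp 2 (K × K'), inferInstance, inferInstance, inferInstance, dsumRep π π',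
    I ∘L (π 1) ∘L V₁, J ∘L (π' 1) ∘L V₃', hV₁.push _ I hI ?_, hV₃'.push _ J hJ ?_, ?_⟩
  · intro a k
    apply lp_ext
    · rfl
    · exact (map_zero (π' a)).symm
  · intro a k
    apply lp_ext
    · exact hw a k
    · exact hQ a k
  · refine ContinuousLinearMap.opNorm_le_bound _ (by positivity) fun h => ?_
    have h2 : J (π' 1 (V₂' h)) = I (π 1 (V₂ h)) := by
      apply lp_ext
      · exact hw1 h
      · exact hQ1 h
    have key : (I ∘L (π 1) ∘L V₁ - J ∘L (π' 1) ∘L V₃') h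
        = I (π 1 ((V₁ - V₂) h)) + J (π' 1 ((V₂' - V₃') h)) := by
      simp only [ContinuousLinearMap.sub_apply, ContinuousLinearMap.comp_apply, map_sub, h2]
      abel
    rw [key, add_mul]
    refine (norm_add_le _ _).trans (add_le_add ?_ ?_)
    · rw [hI]
      exact (pi_one_norm π _).trans ((V₁ - V₂).le_opNorm h)
    · rw [hJ]
      exact (pi_one_norm π' _).trans ((V₂' - V₃').le_opNorm h)
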